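/- Let C be a Z₂Z₄[ξ]-skew cyclic code, identified with a left R₄[x,θ₄]-submodule of R_θ, and let Ψ : C → R₄[x,θ₄]/⟨x^s−1⟩ be the projection onto the second coordinate. If Ψ(C) = ⟨g(x)+2a(x)⟩, then C = ⟨(f(x),0), (l(x), g(x)+2a(x))⟩, where f(x) |_r x^r−1 (mod 2), g(x)+2a(x) |_r x^s−1 in R₄[x,θ₄], and l(x) ∈ R₂[x,θ₂] satisfies deg(l(x)) < deg(f(x)) and f(x) |_r h_{g,a}(x)l(x) (mod 2), where x^s−1 = h_{g,a}(x)(g(x)+2a(x)). -/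

import Mathlib

set_option synthInstance.maxHeartbeats 1000000
set_option maxHeartbeats 2000000

noncomputable section
open Polynomial

abbrev Z4 : Type := ZMod 4
abbrev Z2 : Type := ZMod 2

/-- The mod 2 reduction map `Z₄ → Z₂`. -/
def bar : Z4 →+* Z2 := ZMod.castHom (m := 2) (by norm_num) Z2

/-- The ring `R₄ = Z₄[x]/⟨h⟩` (for `h` basic primitive, the Galois ring `GR(4,m)`). -/
abbrev R4 (h : Z4[X]) : Type := Z4[X] ⧸ Ideal.span {h}

/-- The ring `R₂ = Z₂[x]/⟨h̄⟩` (for `h` basic primitive, the field `F_{2^m}`). -/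
abbrev R2 (h : Z4[X]) : Type := Z2[X] ⧸ Ideal.span {h.map bar}

/-- `ξ`, the class of `x` in `R₄`. -/
def xi (h : Z4[X]) : R4 h := Ideal.Quotient.mk _ X

/-- `ξ̄`, the class of `x` in `R₂`. -/
def xibar (h : Z4[X]) : R2 h := Ideal.Quotient.mk _ X

/-- The coefficientwise mod 2 reduction `R₄ → R₂`. -/
def barR (h : Z4[X]) : R4 h →+* R2 h :=
  Ideal.quotientMap (Ideal.span {h.map bar}) (Polynomial.mapRingHom bar)
    (by
      rw [Ideal.span_le]
      intro p hp
      simp only [Set.mem_singleton_iff] at hp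
      subst hp
      exact Ideal.mem_comap.mpr (Ideal.subset_span (by simp)))

/-- The canonical representative (of degree `< deg h`) of an element of `R₄`. -/
def rep4 (h : Z4[X]) (α : R4 h) : Z4[X] := Quotient.out α %ₘ h

/-- The canonical representative (of degree `< deg h̄`) of an element of `R₂`. -/
def rep2 (h : Z4[X]) (α : R2 h) : Z2[X] := Quotient.out α %ₘ (h.map bar)

/-- The Frobenius map `θ₄ : ∑ vᵢ ξ^i ↦ ∑ vᵢ ξ^{2i}` of `R₄`, as a bare function:
substitute `ξ²` in the canonical representative. -/
def thetaFun4 (h : Z4[X]) (α : R4 h) : R4 h := Polynomial.aeval (xi h ^ 2) (rep4 h α)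

/-- The Frobenius map `θ₂ : ∑ vᵢ ξ̄^i ↦ ∑ vᵢ ξ̄^{2i}` of `R₂`, as a bare function. -/
def thetaFun2 (h : Z4[X]) (α : R2 h) : R2 h := Polynomial.aeval (xibar h ^ 2) (rep2 h α)

/-- A lift `ι : R₂ → R₄` with `ι` mod 2 the identity: lift the coefficients of the
canonical representative from `{0,1}`. -/
def iota (h : Z4[X]) (α : R2 h) : R4 h :=
  Ideal.Quotient.mk _ ((rep2 h α).sum fun i a => C ((a.val : Z4)) * X ^ i)

/-- `h` is a monic basic primitive polynomial of degree `m`:  `h` is monic, its mod 2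
reduction `h̄` is irreducible over `Z₂`, and the root `ξ̄` of `h̄` is a primitive
element, i.e. has multiplicative order `2^m - 1`. -/
def BasicPrimitive (h : Z4[X]) (m : ℕ) : Prop :=
  h.Monic ∧ h.natDegree = m ∧ Irreducible (h.map bar) ∧ orderOf (xibar h) = 2 ^ m - 1

/-- The scalar multiplication `γ * (α,β) = (γ̄α, γβ)` making `R₂^r × R₄^s` (or any
mixed-alphabet tuple space) an `R₄`-module. -/
def smulStar (h : Z4[X]) {α β : Type*} (γ : R4 h) (v : (α → R2 h) × (β → R4 h)) :
    (α → R2 h) × (β → R4 h) :=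
  (fun i => barR h γ * v.1 i, fun j => γ * v.2 j)

/-! ### Skew polynomial rings -/

/-- The additive endomorphism `p(x) ↦ pᶿ(x)·x` of `A[x]` (the twisted shift). -/
def Tmap {A : Type*} [CommRing A] (θ : A →+* A) : AddMonoid.End (Polynomial A) :=
  (AddMonoidHom.mulRight (X : Polynomial A)).comp (Polynomial.mapRingHom θ).toAddMonoidHom

/-- Left multiplication by the constant `a`, as an additive endomorphism of `A[x]`. -/
def Lmap {A : Type*} [CommRing A] (a : A) : AddMonoid.End (Polynomial A) :=
  AddMonoidHom.mulLeft (C a)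

/-- The skew polynomial ring `A[x;θ]`, realized as the subring of additive
endomorphisms of `A[x]` generated by the constants (acting by left multiplication)
and the twisted shift `Tmap θ`.  In this model multiplication is composition, so
`(a·xᵏ)·(b·xʲ) = a θᵏ(b) x^{k+j}`, i.e. `x·a = θ(a)·x`. -/
def SkewPolySubring (A : Type*) [CommRing A] (θ : A →+* A) :
    Subring (AddMonoid.End (Polynomial A)) :=
  Subring.closure ((Set.range (Lmap (A := A))) ∪ {Tmap θ})

/-- The skew polynomial ring `A[x;θ]` as a type. -/
abbrev Skew (A : Type*) [CommRing A] (θ : A →+* A) : Type _ := SkewPolySubring A θ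

/-- The element `x` of `A[x;θ]`. -/
def xSkew (A : Type*) [CommRing A] (θ : A →+* A) : Skew A θ :=
  ⟨Tmap θ, Subring.subset_closure (Set.mem_union_right _ rfl)⟩

/-- The constant `a` as an element of `A[x;θ]`. -/
def cSkew {A : Type*} [CommRing A] (θ : A →+* A) (a : A) : Skew A θ :=
  ⟨Lmap a, Subring.subset_closure (Set.mem_union_left _ ⟨a, rfl⟩)⟩

/-- The skew polynomial `∑ aᵢ xⁱ ∈ A[x;θ]` attached to coefficient data `p = ∑ aᵢ Xⁱ`. -/
def ofPoly {A : Type*} [CommRing A] (θ : A →+* A) (p : Polynomial A) : Skew A θ :=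
  p.sum fun i a => cSkew θ a * xSkew A θ ^ i

/-- The coefficient data of a skew polynomial, recovered by applying the
endomorphism to the polynomial `1`. -/
def toPoly {A : Type*} [CommRing A] {θ : A →+* A} (f : Skew A θ) : Polynomial A :=
  (f : AddMonoid.End (Polynomial A)) 1

/-- `g |ᵣ p` : `g` is a right divisor of `p` in `A[x;θ]`, i.e. `p = u·g`. -/
def RDvd {A : Type*} [CommRing A] {θ : A →+* A} (g p : Skew A θ) : Prop :=
  ∃ u : Skew A θ, p = u * g

/-- The left ideal `⟨x^n - 1⟩` of `A[x;θ]`. -/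
def skewIdeal (A : Type*) [CommRing A] (θ : A →+* A) (n : ℕ) :
    Submodule (Skew A θ) (Skew A θ) :=
  Submodule.span (Skew A θ) {xSkew A θ ^ n - 1}

/-- The quotient left `A[x;θ]`-module `A[x;θ]/⟨x^n-1⟩`. -/
abbrev SkewQuot (A : Type*) [CommRing A] (θ : A →+* A) (n : ℕ) : Type _ :=
  Skew A θ ⧸ skewIdeal A θ n

/-- The polynomial `c₀ + c₁X + ⋯ + c_{n-1}X^{n-1}` attached to a word `c ∈ Aⁿ`. -/
def wordPoly {A : Type*} [CommRing A] {n : ℕ} (c : Fin n → A) : Polynomial A :=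
  ∑ i : Fin n, C (c i) * X ^ (i : ℕ)

/-- Identify the word `c ∈ Aⁿ` with the class of `∑ cᵢ xⁱ` in `A[x;θ]/⟨x^n-1⟩`. -/
def wordToQuot {A : Type*} [CommRing A] (θ : A →+* A) {n : ℕ} (c : Fin n → A) :
    SkewQuot A θ n :=
  Submodule.Quotient.mk (ofPoly θ (wordPoly c))

/-- A linear code of length `n` over `A`: an `A`-submodule of `Aⁿ`, as a set. -/
def IsLinearCode (A : Type*) [CommRing A] {n : ℕ} (C : Set (Fin n → A)) : Prop :=
  0 ∈ C ∧ (∀ u ∈ C, ∀ v ∈ C, u + v ∈ C) ∧ ∀ γ : A, ∀ u ∈ C, γ • u ∈ C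

/-- The `θ`-cyclic shift `(c₀,…,c_{n-1}) ↦ (θ(c_{n-1}),θ(c₀),…,θ(c_{n-2}))`. -/
def skewShift {A : Type*} [CommRing A] (θ : A →+* A) {n : ℕ} [NeZero n]
    (c : Fin n → A) : Fin n → A :=
  fun i => θ (c (i - 1))
/-! ### The module `R_θ` and `Z₂Z₄[ξ]`-codes -/

/-- A `Z₂Z₄[ξ]`-linear code: an `R₄`-submodule of `R₂^r × R₄^s` (as a set). -/
def IsZ2Z4Linear (h : Z4[X]) {r s : ℕ} (C : Set ((Fin r → R2 h) × (Fin s → R4 h))) : Prop :=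
  0 ∈ C ∧ (∀ u ∈ C, ∀ v ∈ C, u + v ∈ C) ∧ ∀ γ : R4 h, ∀ u ∈ C, smulStar h γ u ∈ C

/-- The joint `θ`-cyclic shift on `R₂^r × R₄^s`. -/
def jointShift (h : Z4[X]) (θ2 : R2 h →+* R2 h) (θ4 : R4 h →+* R4 h) {r s : ℕ}
    [NeZero r] [NeZero s] (v : (Fin r → R2 h) × (Fin s → R4 h)) :
    (Fin r → R2 h) × (Fin s → R4 h) :=
  (skewShift θ2 v.1, skewShift θ4 v.2)

/-- The identification of `R₂^r × R₄^s` with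
`R_θ = R₂[x;θ₂]/⟨x^r-1⟩ × R₄[x;θ₄]/⟨x^s-1⟩`. -/
def pairToQuot (h : Z4[X]) (θ2 : R2 h →+* R2 h) (θ4 : R4 h →+* R4 h) {r s : ℕ}
    (v : (Fin r → R2 h) × (Fin s → R4 h)) :
    SkewQuot (R2 h) θ2 r × SkewQuot (R4 h) θ4 s :=
  (wordToQuot θ2 v.1, wordToQuot θ4 v.2)

/-- The coefficientwise mod 2 reduction `R₄[x;θ₄] → R₂[x;θ₂]`, `f ↦ f̄`. -/
def redSkew (h : Z4[X]) (θ2 : R2 h →+* R2 h) {θ4 : R4 h →+* R4 h}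
    (f : Skew (R4 h) θ4) : Skew (R2 h) θ2 :=
  ofPoly θ2 ((toPoly f).map (barR h))

/-- The left action of `R₄[x;θ₄]` on `R_θ`, `f * (g(x), h(x)) = (f̄ g mod (x^r-1), f h mod (x^s-1))`. -/
def smulRtheta (h : Z4[X]) (θ2 : R2 h →+* R2 h) (θ4 : R4 h →+* R4 h) {r s : ℕ}
    (f : Skew (R4 h) θ4)
    (u : SkewQuot (R2 h) θ2 r × SkewQuot (R4 h) θ4 s) :
    SkewQuot (R2 h) θ2 r × SkewQuot (R4 h) θ4 s :=
  (redSkew h θ2 f • u.1, f • u.2)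

/-- `D` is a left `R₄[x;θ₄]`-submodule of `R_θ` (with respect to the action above). -/
def IsLeftSubmodRtheta (h : Z4[X]) (θ2 : R2 h →+* R2 h) (θ4 : R4 h →+* R4 h) {r s : ℕ}
    (D : Set (SkewQuot (R2 h) θ2 r × SkewQuot (R4 h) θ4 s)) : Prop :=
  0 ∈ D ∧ (∀ u ∈ D, ∀ v ∈ D, u + v ∈ D) ∧
    ∀ f : Skew (R4 h) θ4, ∀ u ∈ D, smulRtheta h θ2 θ4 f u ∈ D

/-! Right division with remainder makes every left ideal of `R₂[x,θ₂]` principal, because `R₂` is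
a field. The `p` with `(p,0) ∈ C` form a left ideal containing `x^r-1`; let `f` generate it. Lift
`G = g+2a ∈ Ψ(C)` to `(l,G) ∈ C` and reduce `l` modulo `f`. Since `h_{g,a}` kills `G` modulo
`x^s-1`, it carries `(l,G)` to `(h_{g,a}l, 0)`, so `f` right-divides `h_{g,a}l`. Finally, for
`u ∈ C` choose `c₂` with `Ψ(u) = c₂G`: then `u - c₂(l,G)` lies in the kernel of `Ψ`, hence is a
multiple of `(f,0)`. -/

section SkewPolynomial

variable {A : Type*} [CommRing A] (θ : A →+* A)

theorem coe_cSkew_apply (a : A) (p : A[X]) :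
    (cSkew θ a : AddMonoid.End A[X]) p = C a * p := rfl

theorem coe_xSkew_apply (p : A[X]) :
    (xSkew A θ : AddMonoid.End A[X]) p = p.map θ * X := rfl

theorem coe_skew_add_apply {θ : A →+* A} (f g : Skew A θ) (p : A[X]) :
    ((f + g : Skew A θ) : AddMonoid.End A[X]) p =
      (f : AddMonoid.End A[X]) p + (g : AddMonoid.End A[X]) p := rfl

theorem coe_skew_mul_apply {θ : A →+* A} (f g : Skew A θ) (p : A[X]) :
    ((f * g : Skew A θ) : AddMonoid.End A[X]) p =
      (f : AddMonoid.End A[X]) ((g : AddMonoid.End A[X]) p) := rfl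

theorem skew_ext {θ : A →+* A} {f g : Skew A θ}
    (H : ∀ p, (f : AddMonoid.End A[X]) p = (g : AddMonoid.End A[X]) p) : f = g :=
  Subtype.ext (AddMonoidHom.ext H)

theorem cSkew_zero : cSkew θ 0 = 0 :=
  skew_ext fun p => by simp [coe_cSkew_apply]

theorem cSkew_one : cSkew θ 1 = 1 :=
  skew_ext fun p => by simp [coe_cSkew_apply]

theorem cSkew_add (a b : A) : cSkew θ (a + b) = cSkew θ a + cSkew θ b :=
  skew_ext fun p => by simp only [coe_skew_add_apply, coe_cSkew_apply, C_add, add_mul]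

theorem cSkew_mul (a b : A) : cSkew θ (a * b) = cSkew θ a * cSkew θ b :=
  skew_ext fun p => by simp only [coe_skew_mul_apply, coe_cSkew_apply, C_mul, mul_assoc]

theorem xSkew_mul_cSkew (a : A) :
    xSkew A θ * cSkew θ a = cSkew θ (θ a) * xSkew A θ :=
  skew_ext fun p => by
    simp only [coe_skew_mul_apply, coe_cSkew_apply, coe_xSkew_apply, Polynomial.map_mul, map_C,
      mul_assoc]

theorem coe_xSkew_pow_apply (n : ℕ) (p : A[X]) :
    ((xSkew A θ ^ n : Skew A θ) : AddMonoid.End A[X]) p = p.map (θ ^ n) * X ^ n := by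
  induction n with
  | zero => simp [RingHom.one_def]
  | succ n ih =>
    rw [pow_succ', coe_skew_mul_apply, ih, coe_xSkew_apply, pow_succ' θ,
      RingHom.mul_def, ← Polynomial.map_map, Polynomial.map_mul, Polynomial.map_pow,
      Polynomial.map_X, mul_assoc, ← pow_succ]

theorem coe_cSkew_mul_xSkew_pow_apply (a : A) (n : ℕ) (p : A[X]) :
    ((cSkew θ a * xSkew A θ ^ n : Skew A θ) : AddMonoid.End A[X]) p =
      C a * (p.map (θ ^ n) * X ^ n) := by
  rw [coe_skew_mul_apply, coe_xSkew_pow_apply, coe_cSkew_apply]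

theorem ofPoly_add (p q : A[X]) : ofPoly θ (p + q) = ofPoly θ p + ofPoly θ q :=
  Polynomial.sum_add_index p q _ (by simp [cSkew_zero]) (by simp [cSkew_add, add_mul])

/-- `ofPoly` bundled as an additive homomorphism. It is not a ring homomorphism, since the product
of `A[X]` is not the skew product. -/
def ofPolyHom : A[X] →+ Skew A θ :=
  AddMonoidHom.mk' (ofPoly θ) (ofPoly_add θ)

theorem ofPoly_zero : ofPoly θ (0 : A[X]) = 0 := map_zero (ofPolyHom θ)

theorem ofPoly_neg (p : A[X]) : ofPoly θ (-p) = -ofPoly θ p := map_neg (ofPolyHom θ) p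

theorem ofPoly_sub (p q : A[X]) : ofPoly θ (p - q) = ofPoly θ p - ofPoly θ q :=
  map_sub (ofPolyHom θ) p q

theorem ofPoly_monomial (n : ℕ) (a : A) :
    ofPoly θ (monomial n a) = cSkew θ a * xSkew A θ ^ n :=
  Polynomial.sum_monomial_index a _ (by simp [cSkew_zero])

theorem ofPoly_X_pow (n : ℕ) : ofPoly θ (X ^ n : A[X]) = xSkew A θ ^ n := by
  rw [← monomial_one_right_eq_X_pow, ofPoly_monomial, cSkew_one, one_mul]

theorem ofPoly_one : ofPoly θ (1 : A[X]) = 1 := by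
  simpa only [pow_zero] using ofPoly_X_pow θ 0

theorem cSkew_mul_ofPoly (a : A) (p : A[X]) : cSkew θ a * ofPoly θ p = ofPoly θ (C a * p) := by
  induction p using Polynomial.induction_on' with
  | add p q hp hq => rw [ofPoly_add, mul_add, hp, hq, mul_add, ofPoly_add]
  | monomial n b =>
    rw [ofPoly_monomial, C_mul_monomial, ofPoly_monomial, cSkew_mul, mul_assoc]

theorem xSkew_mul_ofPoly (p : A[X]) : xSkew A θ * ofPoly θ p = ofPoly θ (p.map θ * X) := by
  induction p using Polynomial.induction_on' with
  | add p q hp hq => rw [ofPoly_add, mul_add, hp, hq, Polynomial.map_add, add_mul, ofPoly_add]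
  | monomial n b =>
    rw [ofPoly_monomial, map_monomial, monomial_mul_X, ofPoly_monomial, ← mul_assoc,
      xSkew_mul_cSkew, mul_assoc, ← pow_succ']

theorem skew_induction {P : Skew A θ → Prop} (const : ∀ a, P (cSkew θ a)) (x : P (xSkew A θ))
    (add : ∀ f g, P f → P g → P (f + g)) (mul : ∀ f g, P f → P g → P (f * g)) (f : Skew A θ) :
    P f := by
  obtain ⟨f, hf⟩ := f
  induction hf using Subring.closure_induction with
  | mem f hf =>
    obtain ⟨a, rfl⟩ | rfl := hf
    · exact const a
    · exact x
  | zero => exact (congrArg P (cSkew_zero θ)).mp (const 0)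
  | one => exact (congrArg P (cSkew_one θ)).mp (const 1)
  | add f g _ _ hf hg => exact add _ _ hf hg
  | neg f hf' hf =>
    have hneg : (-⟨f, hf'⟩ : Skew A θ) = cSkew θ (-1) * ⟨f, hf'⟩ :=
      skew_ext fun p => by
        rw [coe_skew_mul_apply, coe_cSkew_apply, C_neg, C_1, neg_one_mul]
        rfl
    exact (congrArg P hneg).mpr (mul _ _ (const (-1)) hf)
  | mul f g _ _ hf hg => exact mul _ _ hf hg

/-- Under `ofPoly`, the tautological action of `Skew A θ ⊆ End A[X]` on `A[X]` becomes the left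
regular representation, so skew products are computed by evaluating endomorphisms. -/
theorem mul_ofPoly (f : Skew A θ) (q : A[X]) :
    f * ofPoly θ q = ofPoly θ ((f : AddMonoid.End A[X]) q) := by
  induction f using skew_induction generalizing q with
  | const a => exact cSkew_mul_ofPoly θ a q
  | x => exact xSkew_mul_ofPoly θ q
  | add f g hf hg => rw [add_mul, hf, hg, coe_skew_add_apply, ofPoly_add]
  | mul f g hf hg => rw [mul_assoc, hg, hf, coe_skew_mul_apply]

theorem ofPoly_toPoly (f : Skew A θ) : ofPoly θ (toPoly f) = f := by
  rw [toPoly, ← mul_ofPoly, ofPoly_one, mul_one]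

theorem ofPoly_surjective : Function.Surjective (ofPoly θ) :=
  fun f => ⟨toPoly f, ofPoly_toPoly θ f⟩

theorem toPoly_add {θ : A →+* A} (f g : Skew A θ) : toPoly (f + g) = toPoly f + toPoly g := rfl

theorem toPoly_cSkew_mul_xSkew_pow (a : A) (n : ℕ) :
    toPoly (cSkew θ a * xSkew A θ ^ n) = monomial n a := by
  rw [toPoly, coe_cSkew_mul_xSkew_pow_apply, Polynomial.map_one, one_mul, C_mul_X_pow_eq_monomial]

theorem toPoly_ofPoly (p : A[X]) : toPoly (ofPoly θ p) = p := by
  induction p using Polynomial.induction_on' with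
  | add p q hp hq => rw [ofPoly_add, toPoly_add, hp, hq]
  | monomial n a => rw [ofPoly_monomial, toPoly_cSkew_mul_xSkew_pow]

theorem xSkew_pow_sub_one_ne_zero [Nontrivial A] {n : ℕ} (hn : 0 < n) :
    xSkew A θ ^ n - 1 ≠ 0 := by
  rw [← ofPoly_X_pow, ← ofPoly_one, ← ofPoly_sub, ← ofPoly_zero]
  exact (Function.LeftInverse.injective (toPoly_ofPoly θ)).ne (X_pow_sub_C_ne_zero hn 1)

theorem rDvd_iff_mem_span_singleton {θ : A →+* A} {g p : Skew A θ} :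
    RDvd g p ↔ p ∈ Submodule.span (Skew A θ) {g} := by
  simp only [RDvd, Submodule.mem_span_singleton, smul_eq_mul, eq_comm]

end SkewPolynomial

section Division

variable {A : Type*} [CommRing A] [Nontrivial A] (θ : A →+* A)

theorem exists_degree_sub_lt_of_isUnit_leadingCoeff {f p : A[X]} (hf : IsUnit f.leadingCoeff)
    (hp : p ≠ 0) (hfp : f.degree ≤ p.degree) :
    ∃ (a : A) (n : ℕ), (p - C a * (f.map (θ ^ n) * X ^ n)).degree < p.degree := by
  set n := p.natDegree - f.natDegree
  have hunit : IsUnit ((θ ^ n) f.leadingCoeff) := hf.map _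
  obtain ⟨a, ha⟩ := hunit.dvd (a := p.leadingCoeff)
  rw [mul_comm] at ha
  have hlead : (f.map (θ ^ n) * X ^ n).leadingCoeff = (θ ^ n) f.leadingCoeff := by
    rw [leadingCoeff_mul_X_pow, leadingCoeff_map_of_leadingCoeff_ne_zero _ hunit.ne_zero]
  have hne : (C a).leadingCoeff * (f.map (θ ^ n) * X ^ n).leadingCoeff ≠ 0 := by
    rwa [hlead, leadingCoeff_C, ← ha, leadingCoeff_ne_zero]
  have hdeg : (C a * (f.map (θ ^ n) * X ^ n)).degree = p.degree := by
    have hf0 : f ≠ 0 := leadingCoeff_ne_zero.mp hf.ne_zero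
    have ha0 : a ≠ 0 := by
      rintro rfl
      simp at hne
    have hnat : n + f.natDegree = p.natDegree :=
      Nat.sub_add_cancel (natDegree_le_natDegree hfp)
    rw [degree_mul' hne, degree_C ha0, zero_add, degree_mul_X_pow,
      degree_map_eq_of_leadingCoeff_ne_zero _ hunit.ne_zero, degree_eq_natDegree hf0,
      degree_eq_natDegree hp, ← hnat]
    push_cast
    exact add_comm _ _
  have hcoeff : (C a * (f.map (θ ^ n) * X ^ n)).leadingCoeff = p.leadingCoeff := by
    rw [leadingCoeff_mul' hne, hlead, leadingCoeff_C, ha]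
  exact ⟨a, n, degree_sub_lt_left hdeg.symm hp hcoeff.symm⟩

theorem exists_ofPoly_eq_mul_add_degree_lt {f : A[X]} (hf : IsUnit f.leadingCoeff) (p : A[X]) :
    ∃ (q : Skew A θ) (l : A[X]),
      l.degree < f.degree ∧ ofPoly θ p = q * ofPoly θ f + ofPoly θ l := by
  induction p using degree_lt_wf.induction with
  | _ p ih =>
    by_cases hlt : p.degree < f.degree
    · exact ⟨0, p, hlt, by rw [zero_mul, zero_add]⟩
    have hfp : f.degree ≤ p.degree := not_lt.mp hlt
    have hp : p ≠ 0 := by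
      rintro rfl
      exact hf.ne_zero (by simpa using hfp)
    obtain ⟨a, n, hdeg⟩ := exists_degree_sub_lt_of_isUnit_leadingCoeff θ hf hp hfp
    obtain ⟨q, l, hl, hq⟩ := ih _ hdeg
    refine ⟨q + cSkew θ a * xSkew A θ ^ n, l, hl, ?_⟩
    rw [ofPoly_sub, ← coe_cSkew_mul_xSkew_pow_apply, ← mul_ofPoly, sub_eq_iff_eq_add] at hq
    rw [hq, add_mul, add_right_comm]

theorem isPrincipalIdealRing_skew {K : Type*} [Field K] (θ : K →+* K) :
    IsPrincipalIdealRing (Skew K θ) := by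
  refine ⟨fun I => ?_⟩
  by_cases hI : I = ⊥
  · exact hI ▸ bot_isPrincipal
  obtain ⟨g, hgI, hg⟩ := Submodule.exists_mem_ne_zero_of_ne_bot hI
  obtain ⟨g, rfl⟩ := ofPoly_surjective θ g
  obtain ⟨f, ⟨hf, hfI⟩, hmin⟩ := degree_lt_wf.has_min {p : K[X] | p ≠ 0 ∧ ofPoly θ p ∈ I}
    ⟨g, fun h0 => hg (h0 ▸ ofPoly_zero θ), hgI⟩
  refine ⟨ofPoly θ f, le_antisymm (fun p hp => ?_)
    ((Submodule.span_singleton_le_iff_mem _ _).2 hfI)⟩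
  obtain ⟨p, rfl⟩ := ofPoly_surjective θ p
  obtain ⟨q, l, hl, hq⟩ :=
    exists_ofPoly_eq_mul_add_degree_lt θ (leadingCoeff_ne_zero.2 hf).isUnit p
  have hlI : ofPoly θ l ∈ I := by
    rw [hq] at hp
    exact (I.add_mem_iff_right (I.smul_mem q hfI)).1 hp
  have hl0 : l = 0 := by
    by_contra hl0
    exact hmin l ⟨hl0, hlI⟩ hl
  rw [hq, hl0, ofPoly_zero, add_zero]
  exact Submodule.smul_mem _ q (Submodule.mem_span_singleton_self _)

end Division

section Words

variable {A : Type*} [CommRing A] (θ : A →+* A) {n : ℕ}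

theorem mk_xSkew_pow_sub_one :
    (Submodule.Quotient.mk (xSkew A θ ^ n - 1) : SkewQuot A θ n) = 0 :=
  (Submodule.Quotient.mk_eq_zero _).2 (Submodule.mem_span_singleton_self _)

theorem wordPoly_add (c d : Fin n → A) : wordPoly (c + d) = wordPoly c + wordPoly d := by
  simp only [wordPoly, Pi.add_apply, C_add, add_mul, Finset.sum_add_distrib]

theorem wordPoly_smul (a : A) (c : Fin n → A) : wordPoly (a • c) = C a * wordPoly c := by
  simp only [wordPoly, Pi.smul_apply, smul_eq_mul, C_mul, Finset.mul_sum, mul_assoc]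

theorem ofPoly_wordPoly (c : Fin n → A) :
    ofPoly θ (wordPoly c) = ∑ i, cSkew θ (c i) * xSkew A θ ^ (i : ℕ) := by
  simp only [wordPoly, C_mul_X_pow_eq_monomial, ← ofPoly_monomial]
  exact map_sum (ofPolyHom θ) _ _

theorem wordToQuot_add (c d : Fin n → A) :
    wordToQuot θ (c + d) = wordToQuot θ c + wordToQuot θ d := by
  rw [wordToQuot, wordPoly_add, ofPoly_add, Submodule.Quotient.mk_add]
  rfl

theorem wordToQuot_zero : wordToQuot θ (0 : Fin n → A) = 0 := by
  simpa using wordToQuot_add θ (0 : Fin n → A) 0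

theorem wordToQuot_smul (a : A) (c : Fin n → A) :
    wordToQuot θ (a • c) = cSkew θ a • wordToQuot θ c := by
  rw [wordToQuot, wordPoly_smul, ← cSkew_mul_ofPoly]
  rfl

theorem xSkew_pow_mod_sub_xSkew_pow_mem_skewIdeal {k : ℕ} (hk : k ≤ n) :
    xSkew A θ ^ (k % n) - xSkew A θ ^ k ∈ skewIdeal A θ n := by
  obtain hlt | rfl := hk.lt_or_eq
  · rw [Nat.mod_eq_of_lt hlt, sub_self]
    exact Submodule.zero_mem _
  · rw [Nat.mod_self, pow_zero, ← neg_sub]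
    exact Submodule.neg_mem _ (Submodule.mem_span_singleton_self _)

theorem wordToQuot_skewShift [NeZero n] (c : Fin n → A) :
    wordToQuot θ (skewShift θ c) = xSkew A θ • wordToQuot θ c := by
  have hshift : ofPoly θ (wordPoly (skewShift θ c)) =
      ∑ i, cSkew θ (θ (c i)) * xSkew A θ ^ ((i + 1 : ℕ) % n) := by
    rw [ofPoly_wordPoly, ← Equiv.sum_comp (Equiv.addRight (1 : Fin n))]
    simp [skewShift, Fin.val_add]
  have hmul : xSkew A θ * ofPoly θ (wordPoly c) =
      ∑ i, cSkew θ (θ (c i)) * xSkew A θ ^ (i + 1 : ℕ) := by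
    simp only [ofPoly_wordPoly, Finset.mul_sum, pow_succ', ← mul_assoc, xSkew_mul_cSkew]
  refine (Submodule.Quotient.eq _).2 ?_
  change _ - xSkew A θ * _ ∈ _
  rw [hshift, hmul, ← Finset.sum_sub_distrib]
  refine Submodule.sum_mem _ fun i _ => ?_
  rw [← mul_sub]
  exact Submodule.smul_mem _ _ (xSkew_pow_mod_sub_xSkew_pow_mem_skewIdeal θ i.is_lt)

theorem wordToQuot_iterate_skewShift [NeZero n] (k : ℕ) (c : Fin n → A) :
    wordToQuot θ ((skewShift θ)^[k] c) = xSkew A θ ^ k • wordToQuot θ c := by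
  induction k with
  | zero => rw [pow_zero, one_smul, Function.iterate_zero_apply]
  | succ k ih =>
    rw [Function.iterate_succ_apply', wordToQuot_skewShift, ih, pow_succ', mul_smul]

end Words

section Rtheta

variable {h : Z4[X]} {θ2 : R2 h →+* R2 h} {θ4 : R4 h →+* R4 h} {r s : ℕ}

theorem barR_surjective : Function.Surjective (barR h) :=
  Ideal.quotientMap_surjective (Polynomial.map_surjective _ (ZMod.castHom_surjective _))

theorem redSkew_ofPoly (p : (R4 h)[X]) :
    redSkew h θ2 (ofPoly θ4 p) = ofPoly θ2 (p.map (barR h)) := by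
  rw [redSkew, toPoly_ofPoly]

theorem redSkew_surjective :
    Function.Surjective (redSkew h θ2 : Skew (R4 h) θ4 → Skew (R2 h) θ2) := by
  intro q
  obtain ⟨p, rfl⟩ := ofPoly_surjective θ2 q
  obtain ⟨p, rfl⟩ := Polynomial.map_surjective _ barR_surjective p
  exact ⟨ofPoly θ4 p, redSkew_ofPoly p⟩

theorem smulRtheta_add (f g : Skew (R4 h) θ4)
    (u : SkewQuot (R2 h) θ2 r × SkewQuot (R4 h) θ4 s) :
    smulRtheta h θ2 θ4 (f + g) u = smulRtheta h θ2 θ4 f u + smulRtheta h θ2 θ4 g u := by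
  rw [smulRtheta, redSkew, toPoly_add, Polynomial.map_add, ofPoly_add, add_smul, add_smul]
  rfl

theorem smulRtheta_neg_one (u : SkewQuot (R2 h) θ2 r × SkewQuot (R4 h) θ4 s) :
    smulRtheta h θ2 θ4 (-1) u = -u := by
  rw [smulRtheta, ← ofPoly_one, ← ofPoly_neg, redSkew_ofPoly, Polynomial.map_neg,
    Polynomial.map_one, ofPoly_neg, ofPoly_neg, ofPoly_one, ofPoly_one, neg_one_smul, neg_one_smul]
  rfl

/-- For arbitrary `θ2` and `θ4` the map `redSkew` is additive but need not be multiplicative, so the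
action is matched with the operations on words one monomial `γxⁿ` at a time. -/
theorem pairToQuot_smulStar_iterate_jointShift [NeZero r] [NeZero s] (γ : R4 h) (n : ℕ)
    (v : (Fin r → R2 h) × (Fin s → R4 h)) :
    pairToQuot h θ2 θ4 (smulStar h γ ((jointShift h θ2 θ4)^[n] v)) =
      smulRtheta h θ2 θ4 (cSkew θ4 γ * xSkew (R4 h) θ4 ^ n) (pairToQuot h θ2 θ4 v) := by
  have hshift : (jointShift h θ2 θ4)^[n] v = ((skewShift θ2)^[n] v.1, (skewShift θ4)^[n] v.2) :=
    congrFun (Prod.map_iterate (skewShift θ2) (skewShift θ4) n) v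
  have hred : redSkew h θ2 (cSkew θ4 γ * xSkew (R4 h) θ4 ^ n) =
      cSkew θ2 (barR h γ) * xSkew (R2 h) θ2 ^ n := by
    rw [← ofPoly_monomial, redSkew_ofPoly, map_monomial, ofPoly_monomial]
  rw [hshift, smulRtheta, hred, mul_smul, mul_smul]
  simp only [pairToQuot, ← wordToQuot_iterate_skewShift, ← wordToQuot_smul]
  rfl

theorem isLeftSubmodRtheta_image_pairToQuot [NeZero r] [NeZero s]
    {C : Set ((Fin r → R2 h) × (Fin s → R4 h))} (hlin : IsZ2Z4Linear h C)
    (hcyc : ∀ v ∈ C, jointShift h θ2 θ4 v ∈ C) :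
    IsLeftSubmodRtheta h θ2 θ4 (pairToQuot h θ2 θ4 '' C) := by
  obtain ⟨hzero, hadd, hsmul⟩ := hlin
  have hadd' : ∀ u ∈ pairToQuot h θ2 θ4 '' C, ∀ v ∈ pairToQuot h θ2 θ4 '' C,
      u + v ∈ pairToQuot h θ2 θ4 '' C := by
    rintro _ ⟨u, hu, rfl⟩ _ ⟨v, hv, rfl⟩
    exact ⟨u + v, hadd u hu v hv, Prod.ext (wordToQuot_add θ2 _ _) (wordToQuot_add θ4 _ _)⟩
  refine ⟨⟨0, hzero, Prod.ext (wordToQuot_zero θ2) (wordToQuot_zero θ4)⟩, hadd', ?_⟩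
  rintro f _ ⟨v, hv, rfl⟩
  obtain ⟨p, rfl⟩ := ofPoly_surjective θ4 f
  induction p using Polynomial.induction_on' with
  | add p q hp hq =>
    rw [ofPoly_add, smulRtheta_add]
    exact hadd' _ hp _ hq
  | monomial n γ =>
    rw [ofPoly_monomial, ← pairToQuot_smulStar_iterate_jointShift]
    exact Set.mem_image_of_mem _ (hsmul γ _ (Set.MapsTo.iterate hcyc n hv))

namespace IsLeftSubmodRtheta

variable {D : Set (SkewQuot (R2 h) θ2 r × SkewQuot (R4 h) θ4 s)}

theorem sub_mem (hD : IsLeftSubmodRtheta h θ2 θ4 D) {u v} (hu : u ∈ D) (hv : v ∈ D) :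
    u - v ∈ D := by
  rw [sub_eq_add_neg, ← smulRtheta_neg_one]
  exact hD.2.1 u hu _ (hD.2.2 _ v hv)

/-- The left ideal of all `p ∈ R₂[x,θ₂]` with `(p,0) ∈ D`: the kernel of the second projection
`Ψ` on `D`, pulled back from `R₂[x,θ₂]/⟨x^r-1⟩` to `R₂[x,θ₂]`. -/
def kerIdeal (hD : IsLeftSubmodRtheta h θ2 θ4 D) :
    Submodule (Skew (R2 h) θ2) (Skew (R2 h) θ2) where
  carrier := {p | (Submodule.Quotient.mk p, 0) ∈ D}
  zero_mem' := hD.1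
  add_mem' {p q} hp hq := by simpa using hD.2.1 _ hp _ hq
  smul_mem' c p hp := by
    obtain ⟨c, rfl⟩ := redSkew_surjective (θ4 := θ4) c
    have hcp := hD.2.2 c _ hp
    rwa [smulRtheta, smul_zero, ← Submodule.Quotient.mk_smul] at hcp

theorem mem_kerIdeal (hD : IsLeftSubmodRtheta h θ2 θ4 D) {p : Skew (R2 h) θ2} :
    p ∈ hD.kerIdeal ↔ (Submodule.Quotient.mk p, 0) ∈ D := Iff.rfl

theorem xSkew_pow_sub_one_mem_kerIdeal (hD : IsLeftSubmodRtheta h θ2 θ4 D) :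
    xSkew (R2 h) θ2 ^ r - 1 ∈ hD.kerIdeal := by
  rw [mem_kerIdeal, mk_xSkew_pow_sub_one]
  exact hD.1

theorem redSkew_mul_mem_kerIdeal (hD : IsLeftSubmodRtheta h θ2 θ4 D) {l : Skew (R2 h) θ2}
    {G H : Skew (R4 h) θ4} (hGH : xSkew (R4 h) θ4 ^ s - 1 = H * G)
    (hlG : (Submodule.Quotient.mk l, Submodule.Quotient.mk G) ∈ D) :
    redSkew h θ2 H * l ∈ hD.kerIdeal := by
  have hmem := hD.2.2 H _ hlG
  rwa [smulRtheta, ← Submodule.Quotient.mk_smul, ← Submodule.Quotient.mk_smul, smul_eq_mul,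
    smul_eq_mul, ← hGH, mk_xSkew_pow_sub_one] at hmem

theorem exists_mem_degree_lt [Nontrivial (R2 h)] (hD : IsLeftSubmodRtheta h θ2 θ4 D) {f : (R2 h)[X]}
    (hf : IsUnit f.leadingCoeff) (hfD : ofPoly θ2 f ∈ hD.kerIdeal) {z : SkewQuot (R4 h) θ4 s}
    (hz : z ∈ Prod.snd '' D) :
    ∃ l : (R2 h)[X], l.degree < f.degree ∧ (Submodule.Quotient.mk (ofPoly θ2 l), z) ∈ D := by
  obtain ⟨⟨y, z⟩, hyz, rfl⟩ := hz
  obtain ⟨p, rfl⟩ := Submodule.Quotient.mk_surjective _ y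
  obtain ⟨p, rfl⟩ := ofPoly_surjective θ2 p
  obtain ⟨q, l, hl, hq⟩ := exists_ofPoly_eq_mul_add_degree_lt θ2 hf p
  refine ⟨l, hl, ?_⟩
  simpa [hq] using hD.sub_mem hyz (hD.kerIdeal.smul_mem q hfD)

theorem eq_setOf_generators (hD : IsLeftSubmodRtheta h θ2 θ4 D) {f : Skew (R2 h) θ2}
    (hf : hD.kerIdeal = Submodule.span _ {f}) {w : SkewQuot (R2 h) θ2 r × SkewQuot (R4 h) θ4 s}
    (hw : w ∈ D) (hsnd : Prod.snd '' D = Submodule.span (Skew (R4 h) θ4) {w.2}) :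
    D = {u | ∃ c₁ c₂ : Skew (R4 h) θ4,
      u = smulRtheta h θ2 θ4 c₁ (Submodule.Quotient.mk f, 0) + smulRtheta h θ2 θ4 c₂ w} := by
  have hfD : (Submodule.Quotient.mk f, 0) ∈ D :=
    hD.mem_kerIdeal.1 (hf ▸ Submodule.mem_span_singleton_self f)
  ext u
  refine ⟨fun hu => ?_, ?_⟩
  · obtain ⟨c₂, hc₂⟩ : ∃ c : Skew (R4 h) θ4, c • w.2 = u.2 := by
      rw [← Submodule.mem_span_singleton, ← SetLike.mem_coe, ← hsnd]
      exact Set.mem_image_of_mem _ hu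
    obtain ⟨p, hp⟩ := Submodule.Quotient.mk_surjective _ (u - smulRtheta h θ2 θ4 c₂ w).1
    have hsub : u - smulRtheta h θ2 θ4 c₂ w = (Submodule.Quotient.mk p, 0) :=
      Prod.ext hp.symm (sub_eq_zero.2 hc₂.symm)
    have hpI : p ∈ hD.kerIdeal := by
      rw [mem_kerIdeal, ← hsub]
      exact hD.sub_mem hu (hD.2.2 c₂ w hw)
    rw [hf] at hpI
    obtain ⟨q, rfl⟩ := Submodule.mem_span_singleton.1 hpI
    obtain ⟨c₁, rfl⟩ := redSkew_surjective (θ4 := θ4) q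
    refine ⟨c₁, c₂, ?_⟩
    rw [← sub_eq_iff_eq_add, hsub, smulRtheta, smul_zero, Submodule.Quotient.mk_smul]
  · rintro ⟨c₁, c₂, rfl⟩
    exact hD.2.1 _ (hD.2.2 c₁ _ hfD) _ (hD.2.2 c₂ _ hw)

end IsLeftSubmodRtheta

end Rtheta

theorem z2z4_skew_cyclic_generators_case_ii_general
    (h : Z4[X]) (hirr : Irreducible (h.map bar))
    (θ4 : R4 h →+* R4 h) (θ2 : R2 h →+* R2 h) (r s : ℕ) [NeZero r] [NeZero s]
    (C : Set ((Fin r → R2 h) × (Fin s → R4 h))) (hlin : IsZ2Z4Linear h C)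
    (hcyc : ∀ v ∈ C, jointShift h θ2 θ4 v ∈ C)
    (G H : (R4 h)[X]) (hGH : xSkew (R4 h) θ4 ^ s - 1 = ofPoly θ4 H * ofPoly θ4 G)
    (hPsi : Prod.snd '' (pairToQuot h θ2 θ4 '' C) =
      ↑(Submodule.span (Skew (R4 h) θ4)
        {(Submodule.Quotient.mk (ofPoly θ4 G) : SkewQuot (R4 h) θ4 s)})) :
    ∃ f l : (R2 h)[X],
      RDvd (ofPoly θ2 f) (xSkew (R2 h) θ2 ^ r - 1) ∧
      l.degree < f.degree ∧
      RDvd (ofPoly θ2 f) (ofPoly θ2 (H.map (barR h)) * ofPoly θ2 l) ∧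
      pairToQuot h θ2 θ4 '' C =
        {u | ∃ c₁ c₂ : Skew (R4 h) θ4,
          u = smulRtheta h θ2 θ4 c₁ (Submodule.Quotient.mk (ofPoly θ2 f), 0)
            + smulRtheta h θ2 θ4 c₂
              (Submodule.Quotient.mk (ofPoly θ2 l), Submodule.Quotient.mk (ofPoly θ4 G))} := by
  have := PrincipalIdealRing.isMaximal_of_irreducible hirr
  let _ : Field (R2 h) := Ideal.Quotient.field _
  have hD := isLeftSubmodRtheta_image_pairToQuot hlin hcyc
  obtain ⟨F, hF⟩ := (isPrincipalIdealRing_skew θ2).principal hD.kerIdeal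
  obtain ⟨f, rfl⟩ := ofPoly_surjective θ2 F
  have hdvd : ∀ p ∈ hD.kerIdeal, RDvd (ofPoly θ2 f) p := fun p hp =>
    rDvd_iff_mem_span_singleton.2 (hF ▸ hp)
  have hf : f ≠ 0 := by
    rintro rfl
    obtain ⟨u, hu⟩ := hdvd _ hD.xSkew_pow_sub_one_mem_kerIdeal
    rw [ofPoly_zero, mul_zero] at hu
    exact xSkew_pow_sub_one_ne_zero θ2 (NeZero.pos r) hu
  obtain ⟨l, hl, hlG⟩ := hD.exists_mem_degree_lt (leadingCoeff_ne_zero.2 hf).isUnit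
    (hF ▸ Submodule.mem_span_singleton_self _)
    (hPsi.symm.subset (Submodule.mem_span_singleton_self _))
  refine ⟨f, l, hdvd _ hD.xSkew_pow_sub_one_mem_kerIdeal, hl, ?_,
    hD.eq_setOf_generators hF hlG hPsi⟩
  rw [← redSkew_ofPoly (θ4 := θ4)]
  exact hdvd _ (hD.redSkew_mul_mem_kerIdeal hGH hlG)

/-- If `Ψ(C) = ⟨g(x)+2a(x)⟩` with `g+2a |ᵣ x^s−1` in `R₄[x,θ₄]`,
say `x^s−1 = h_{g,a}(x)(g(x)+2a(x))`, then `C = ⟨(f(x),0), (l(x),g(x)+2a(x))⟩`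
where `f |ᵣ x^r−1 (mod 2)`, `deg l < deg f` and `f |ᵣ h_{g,a} l (mod 2)`. -/
theorem z2z4_skew_cyclic_generators_case_ii
    (m : ℕ) (hm : 1 ≤ m) (h : Z4[X]) (hbp : BasicPrimitive h m)
    (θ4 : R4 h →+* R4 h) (hθ4 : ⇑θ4 = thetaFun4 h)
    (θ2 : R2 h →+* R2 h) (hθ2 : ⇑θ2 = thetaFun2 h)
    (r s : ℕ) [NeZero r] [NeZero s]
    (C : Set ((Fin r → R2 h) × (Fin s → R4 h))) (hlin : IsZ2Z4Linear h C)
    (hcyc : ∀ v ∈ C, jointShift h θ2 θ4 v ∈ C)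
    (g a hga : Polynomial (R4 h))
    (hgadvd : xSkew (R4 h) θ4 ^ s - 1 = ofPoly θ4 hga * ofPoly θ4 (g + 2 * a))
    (hPsi : Prod.snd '' (pairToQuot h θ2 θ4 '' C) =
      ↑(Submodule.span (Skew (R4 h) θ4) {(Submodule.Quotient.mk (p := skewIdeal (R4 h) θ4 s) (ofPoly θ4 (g + 2 * a)))})) :
    ∃ f l : Polynomial (R2 h),
      RDvd (ofPoly θ2 f) (xSkew (R2 h) θ2 ^ r - 1) ∧
      l.degree < f.degree ∧
      RDvd (ofPoly θ2 f) (ofPoly θ2 (hga.map (barR h)) * ofPoly θ2 l) ∧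
      pairToQuot h θ2 θ4 '' C =
        {u | ∃ c1 c2 : Skew (R4 h) θ4,
          u = smulRtheta h θ2 θ4 c1 ((Submodule.Quotient.mk (p := skewIdeal (R2 h) θ2 r) (ofPoly θ2 f)), 0)
            + smulRtheta h θ2 θ4 c2 ((Submodule.Quotient.mk (p := skewIdeal (R2 h) θ2 r) (ofPoly θ2 l)), (Submodule.Quotient.mk (p := skewIdeal (R4 h) θ4 s) (ofPoly θ4 (g + 2 * a))))} :=
  z2z4_skew_cyclic_generators_case_ii_general h hbp.2.2.1 θ4 θ2 r s C hlin hcyc (g + 2 * a) hga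
    hgadvd hPsi
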